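/- (Local drift condition for forward Euler.) Let U satisfy Assumption 1. For every ℓ ∈ ℕ there exist positive constants γ_ℓ, K_ℓ and C_ℓ such that for every stepsize h ∈ (0,1) and every x ∈ ℝ^n with U(x) < h^{−1/2}, the expectation over a standard Gaussian random vector ξ ∼ N(0,I) on ℝ^n satisfies E[ U(x − h∇U(x) + √(2β⁻¹h)·ξ)^ℓ ] ≤ (e^{−γ_ℓ h} + C_ℓ·U(x)²·h²)·U(x)^ℓ + (K_ℓ/γ_ℓ)·(1 − e^{−γ_ℓ h}). -/

import Mathlib

open MeasureTheory Real Filter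
open scoped ENNReal

noncomputable section

abbrev Euc (n : ℕ) := EuclideanSpace ℝ (Fin n)

/-- Second derivative of `U` at `x` as a bilinear form. -/
def D2 {n : ℕ} (U : Euc n → ℝ) (x v w : Euc n) : ℝ :=
  iteratedFDeriv ℝ 2 U x ![v, w]

/-- Laplacian of `U` at `x`. -/
def lapl {n : ℕ} (U : Euc n → ℝ) (x : Euc n) : ℝ :=
  ∑ i, D2 U x (EuclideanSpace.single i 1) (EuclideanSpace.single i 1)

/-- Assumption 1 on the potential `U`. -/
structure Assumption1 (n : ℕ) (β : ℝ) (U : Euc n → ℝ) where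
  smooth : ContDiff ℝ 4 U
  c : ℝ
  d : ℝ
  EB : ℝ
  c_pos : 0 < c
  c_lt : c < β
  d_pos : 0 < d
  one_le : ∀ x, 1 ≤ U x
  quad_growth : ∀ C > (0:ℝ), ∃ E > (0:ℝ), ∀ x, U x > E → C * (1 + ‖x‖ ^ 2) ≤ U x
  driftB : ∀ x, U x > EB → lapl U x ≤ c * ‖gradient U x‖ ^ 2 - d * U x
  hess_lb : ∃ C : ℝ, 0 ≤ C ∧ ∀ x η : Euc n, -C * ‖η‖ ^ 2 ≤ D2 U x η η
  deriv_bound : ∃ C > (0:ℝ), ∀ x,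
    ‖iteratedFDeriv ℝ 4 U x‖ ⊔ ‖iteratedFDeriv ℝ 3 U x‖ ⊔ ‖iteratedFDeriv ℝ 2 U x‖ ⊔
      ‖gradient U x‖ ≤ C * U x

/-- The Gibbs measure with density `Z⁻¹ exp(-β U x)`. -/
def gibbs (n : ℕ) (β : ℝ) (U : Euc n → ℝ) : Measure (Euc n) :=
  volume.withDensity fun x => ENNReal.ofReal (exp (-β * U x) / ∫ y, exp (-β * U y))

/-- Total variation distance, `‖μ - ν‖_TV = 2 sup_A |μ(A) - ν(A)|`. -/
def tvDist {α : Type*} [MeasurableSpace α] (μ ν : Measure α) : ℝ :=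
  2 * ⨆ A : {A : Set α // MeasurableSet A}, |(μ A.1).toReal - (ν A.1).toReal|

/-- Forward Euler transition density `q_h(x,y)`. -/
def eulerDensity (n : ℕ) (β h : ℝ) (U : Euc n → ℝ) (x y : Euc n) : ℝ :=
  (4 * π * β⁻¹ * h) ^ (-(n : ℝ) / 2) *
    exp (-‖y - x + h • gradient U x‖ ^ 2 / (4 * β⁻¹ * h))

/-- MALA acceptance probability `α_h(x,y)`. -/
def accept (n : ℕ) (β h : ℝ) (U : Euc n → ℝ) (x y : Euc n) : ℝ :=
  min 1 ((eulerDensity n β h U y x * exp (-β * U y)) /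
         (eulerDensity n β h U x y * exp (-β * U x)))

/-- One-step MALA transition kernel. -/
def malaKernel (n : ℕ) (β h : ℝ) (U : Euc n → ℝ) (x : Euc n) : Measure (Euc n) :=
  volume.withDensity (fun y => ENNReal.ofReal (accept n β h U x y * eulerDensity n β h U x y))
  + (1 - ∫⁻ y, ENNReal.ofReal (accept n β h U x y * eulerDensity n β h U x y)) • Measure.dirac x

/-- `k`-step iterate of a transition kernel. -/
def iterKernel {α : Type*} [MeasurableSpace α] (κ : α → Measure α) : ℕ → α → Measure α
  | 0, x => Measure.dirac x
  | k + 1, x => (iterKernel κ k x).bind κ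

/-- The level set `R_h = {x : U(x) < E_⋆ h^{-1/4}}`. -/
def Rset (n : ℕ) (h Estar : ℝ) (U : Euc n → ℝ) : Set (Euc n) :=
  {x | U x < Estar * h ^ (-(1:ℝ) / 4)}

open scoped Classical in
/-- Patched MALA acceptance probability. -/
def acceptBar (n : ℕ) (β h Estar : ℝ) (U : Euc n → ℝ) (x y : Euc n) : ℝ :=
  if x ∈ Rset n h Estar U ∧ y ∈ Rset n h Estar U then accept n β h U x y else 0

/-- One-step patched MALA transition kernel. -/
def patchedKernel (n : ℕ) (β h Estar : ℝ) (U : Euc n → ℝ) (x : Euc n) : Measure (Euc n) :=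
  volume.withDensity
    (fun y => ENNReal.ofReal (acceptBar n β h Estar U x y * eulerDensity n β h U x y))
  + (1 - ∫⁻ y, ENNReal.ofReal (acceptBar n β h Estar U x y * eulerDensity n β h U x y)) •
      Measure.dirac x

/-- Standard Gaussian measure `N(0, I)` on `ℝ^n`. -/
def stdGaussian (n : ℕ) : Measure (Euc n) :=
  volume.withDensity fun ξ => ENNReal.ofReal ((2 * π) ^ (-(n : ℝ) / 2) * exp (-‖ξ‖ ^ 2 / 2))

/-- Forward Euler transition kernel. -/
def eulerKernel (n : ℕ) (β h : ℝ) (U : Euc n → ℝ) (x : Euc n) : Measure (Euc n) :=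
  volume.withDensity fun y => ENNReal.ofReal (eulerDensity n β h U x y)

/-!
Let `L = β⁻¹ Δ - ∇U · ∇` be the generator of the Langevin diffusion and `f = U ^ ℓ`. Averaging over
`ξ` and `-ξ` cancels the odd-order noise terms in the Taylor expansion of `f`, so one Euler step
from `x` has mean at most `f x + h L f x + D U(x)² h² f x`. The remainder is multiplicative in `f x`
because, like `U`, the power `U ^ ℓ` dominates its derivatives up to order four: by Grönwall such a
function grows at most exponentially, at a rate the Gaussian can integrate, and `h |∇U(x)|` stays
bounded in the region `h U(x)² < 1`.

Moreover `L f ≤ -γ f + K`: when `U(x)` is large the drift condition applies and its slack `β - c`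
absorbs the second derivative of `u ↦ u ^ ℓ`, while on a sublevel set of `U` both `f` and `Δ f` are
bounded. Comparing `1 - γ h` with `e^{-γ h}` concludes.
-/

open InnerProductSpace Module
open scoped Gradient Laplacian Nat RealInnerProductSpace

section Taylor

variable {F : Type*} [NormedAddCommGroup F] [NormedSpace ℝ F]

theorem iteratedDeriv_comp_add_smul {G : Type*} [NormedAddCommGroup G] [NormedSpace ℝ G] {k : ℕ}
    {f : F → G} (hf : ContDiff ℝ k f) (x v : F) (t : ℝ) :
    iteratedDeriv k (fun s : ℝ => f (x + s • v)) t
      = iteratedFDeriv ℝ k f (x + t • v) fun _ => v := by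
  have hline : (fun s : ℝ => f (x + s • v))
      = (fun z => f (x + z)) ∘ (ContinuousLinearMap.id ℝ ℝ).smulRight v := by
    ext s; simp
  have hshift : ContDiff ℝ k fun z => f (x + z) := hf.comp (contDiff_const.add contDiff_id)
  rw [iteratedDeriv_eq_iteratedFDeriv, hline,
    ContinuousLinearMap.iteratedFDeriv_comp_right _ hshift t le_rfl, iteratedFDeriv_comp_add_left]
  simp

theorem exists_eq_sum_iteratedFDeriv_add {m : ℕ} {f : F → ℝ} (hf : ContDiff ℝ (m + 1 : ℕ) f)
    (x v : F) :
    ∃ t ∈ Set.Ioo (0 : ℝ) 1, f (x + v)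
      = ∑ k ∈ Finset.range (m + 1), (k ! : ℝ)⁻¹ * iteratedFDeriv ℝ k f x (fun _ => v)
        + ((m + 1)! : ℝ)⁻¹ * iteratedFDeriv ℝ (m + 1) f (x + t • v) (fun _ => v) := by
  have hline : ContDiff ℝ (m + 1 : ℕ) fun s : ℝ => f (x + s • v) :=
    hf.comp (contDiff_const.add (contDiff_id.smul contDiff_const))
  obtain ⟨t, ht, htaylor⟩ := taylor_mean_remainder_lagrange_iteratedDeriv (n := m)
    zero_ne_one (by exact_mod_cast hline.contDiffOn)
  have hcoeff : ∀ k ∈ Finset.range (m + 1),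
      iteratedDerivWithin k (fun s : ℝ => f (x + s • v)) (Set.uIcc 0 1) 0
        = iteratedFDeriv ℝ k f x fun _ => v := fun k hk => by
    have hkm : ((k : ℕ) : WithTop ℕ∞) ≤ (m + 1 : ℕ) := by
      exact_mod_cast (Finset.mem_range.1 hk).le
    rw [iteratedDerivWithin_eq_iteratedDeriv (uniqueDiffOn_uIcc zero_ne_one)
      (hline.of_le hkm).contDiffAt Set.left_mem_uIcc,
      iteratedDeriv_comp_add_smul (hf.of_le hkm), zero_smul, add_zero]
  refine ⟨t, by simpa [Set.uIoo_of_le zero_le_one] using ht, ?_⟩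
  rw [taylor_within_apply, iteratedDeriv_comp_add_smul hf, sub_eq_iff_eq_add'] at htaylor
  simp only [one_smul] at htaylor
  rw [htaylor]
  congr 1
  · exact Finset.sum_congr rfl fun k hk => by rw [hcoeff k hk]; simp
  · simp [div_eq_inv_mul]

theorem le_sum_iteratedFDeriv_add_of_norm_le {m : ℕ} {f : F → ℝ} (hf : ContDiff ℝ (m + 1 : ℕ) f)
    {x v : F} {M : ℝ}
    (hM : ∀ t ∈ Set.Ioo (0 : ℝ) 1, ‖iteratedFDeriv ℝ (m + 1) f (x + t • v)‖ ≤ M) :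
    f (x + v) ≤ ∑ k ∈ Finset.range (m + 1), (k ! : ℝ)⁻¹ * iteratedFDeriv ℝ k f x (fun _ => v)
      + ((m + 1)! : ℝ)⁻¹ * (M * ‖v‖ ^ (m + 1)) := by
  obtain ⟨t, ht, htaylor⟩ := exists_eq_sum_iteratedFDeriv_add hf x v
  have hrem : iteratedFDeriv ℝ (m + 1) f (x + t • v) (fun _ => v) ≤ M * ‖v‖ ^ (m + 1) := by
    refine (le_abs_self _).trans
      (((iteratedFDeriv ℝ (m + 1) f (x + t • v)).le_opNorm _).trans ?_)
    simpa using mul_le_mul_of_nonneg_right (hM t ht) (by positivity)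
  rw [htaylor]
  gcongr

/-- The odd-order terms of the two Taylor expansions cancel. -/
theorem add_sub_le_of_norm_iteratedFDeriv_four_le {f : F → ℝ} (hf : ContDiff ℝ 4 f) {x v : F}
    {M : ℝ} (hM : ∀ w, ‖w‖ ≤ ‖v‖ → ‖iteratedFDeriv ℝ 4 f (x + w)‖ ≤ M) :
    f (x + v) + f (x - v) ≤ 2 * f x + iteratedFDeriv ℝ 2 f x (fun _ => v) + M / 12 * ‖v‖ ^ 4 := by
  have hexpand : ∀ w : F, ‖w‖ = ‖v‖ → f (x + w) ≤ _ := fun w hw =>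
    le_sum_iteratedFDeriv_add_of_norm_le (m := 3) (M := M) hf fun t ht => hM _ <| by
      rw [norm_smul, hw, Real.norm_of_nonneg ht.1.le]
      exact mul_le_of_le_one_left (norm_nonneg v) ht.2.le
  have hneg : ∀ k, iteratedFDeriv ℝ k f x (fun _ => -v)
      = (-1) ^ k * iteratedFDeriv ℝ k f x fun _ => v := fun k => by
    simpa using (iteratedFDeriv ℝ k f x).map_smul_univ (fun _ => (-1 : ℝ)) (fun _ => v)
  have hplus := hexpand v rfl
  have hminus := hexpand (-v) (norm_neg v)
  simp only [hneg, Finset.sum_range_succ, Finset.sum_range_zero, norm_neg, ← sub_eq_add_neg]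
    at hplus hminus
  norm_num [Nat.factorial] at hplus hminus
  linarith

end Taylor

section DominatesDerivs

variable {F : Type*} [NormedAddCommGroup F] [NormedSpace ℝ F] {N : ℕ} {A C : ℝ} {f g : F → ℝ}

/-- A `C^N` function that dominates its own derivatives up to order `N`, with constant `C`. Order
`0` is included so that powers satisfy the same kind of bound. -/
structure DominatesDerivs (N : ℕ) (C : ℝ) (f : F → ℝ) : Prop where
  contDiff : ContDiff ℝ N f
  nonneg : ∀ x, 0 ≤ f x
  norm_iteratedFDeriv_le : ∀ k ≤ N, ∀ x, ‖iteratedFDeriv ℝ k f x‖ ≤ C * f x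

namespace DominatesDerivs

theorem one : DominatesDerivs N 1 (1 : F → ℝ) where
  contDiff := contDiff_const
  nonneg _ := zero_le_one
  norm_iteratedFDeriv_le k _ x := by
    rcases eq_or_ne k 0 with rfl | hk
    · simp
    · rw [Pi.one_def, iteratedFDeriv_const_of_ne hk]
      simp

theorem mul (hf : DominatesDerivs N A f) (hg : DominatesDerivs N C g) :
    DominatesDerivs N (2 ^ N * (A * C)) (f * g) where
  contDiff := hf.contDiff.mul hg.contDiff
  nonneg x := mul_nonneg (hf.nonneg x) (hg.nonneg x)
  norm_iteratedFDeriv_le k hk x := by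
    have hA : 0 ≤ A * f x := (norm_nonneg _).trans (hf.norm_iteratedFDeriv_le 0 N.zero_le x)
    have hC : 0 ≤ C * g x := (norm_nonneg _).trans (hg.norm_iteratedFDeriv_le 0 N.zero_le x)
    calc ‖iteratedFDeriv ℝ k (f * g) x‖
        ≤ ∑ i ∈ Finset.range (k + 1), (k.choose i : ℝ)
            * ‖iteratedFDeriv ℝ i f x‖ * ‖iteratedFDeriv ℝ (k - i) g x‖ :=
          norm_iteratedFDeriv_mul_le hf.contDiff hg.contDiff x (by exact_mod_cast hk)
      _ ≤ ∑ i ∈ Finset.range (k + 1), (k.choose i : ℝ) * (A * f x) * (C * g x) := by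
          gcongr with i hi
          · exact hf.norm_iteratedFDeriv_le i (by grind) x
          · exact hg.norm_iteratedFDeriv_le (k - i) (by omega) x
      _ = 2 ^ k * ((A * f x) * (C * g x)) := by
          simp_rw [mul_assoc (Nat.cast _ : ℝ)]
          rw [← Finset.sum_mul]
          exact_mod_cast congrArg (fun j : ℕ => (j : ℝ) * ((A * f x) * (C * g x)))
            (Nat.sum_range_choose k)
      _ ≤ 2 ^ N * ((A * f x) * (C * g x)) := by gcongr; norm_num
      _ = 2 ^ N * (A * C) * (f * g) x := by simp only [Pi.mul_apply]; ring

theorem pow (hf : DominatesDerivs N C f) (ℓ : ℕ) :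
    DominatesDerivs N ((2 ^ N * C) ^ ℓ) (f ^ ℓ) := by
  induction ℓ with
  | zero => simpa using one
  | succ ℓ ih =>
    rw [pow_succ, pow_succ, mul_left_comm]
    exact ih.mul hf

theorem one_le_const (hf : DominatesDerivs N C f) {x : F} (hx : 0 < f x) : 1 ≤ C := by
  have hzero := hf.norm_iteratedFDeriv_le 0 N.zero_le x
  rw [norm_iteratedFDeriv_zero, Real.norm_of_nonneg hx.le] at hzero
  exact (le_mul_iff_one_le_left hx).1 hzero

theorem apply_add_le (hf : DominatesDerivs N C f) (hN : N ≠ 0) (x v : F) :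
    f (x + v) ≤ f x * exp (C * ‖v‖) := by
  have hdiff : Differentiable ℝ f := hf.contDiff.differentiable (by exact_mod_cast hN)
  have hderiv (t : ℝ) : HasDerivAt (fun s : ℝ => f (x + s • v)) (fderiv ℝ f (x + t • v) v) t := by
    have hline : HasDerivAt (fun s : ℝ => x + s • v) v t := by
      simpa using ((hasDerivAt_id t).smul_const v).const_add x
    exact (hdiff _).hasFDerivAt.comp_hasDerivAt t hline
  have hbound (t : ℝ) : ‖fderiv ℝ f (x + t • v) v‖ ≤ C * ‖v‖ * ‖f (x + t • v)‖ + 0 := by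
    have hone := hf.norm_iteratedFDeriv_le 1 (Nat.one_le_iff_ne_zero.2 hN) (x + t • v)
    rw [norm_iteratedFDeriv_one] at hone
    calc ‖fderiv ℝ f (x + t • v) v‖ ≤ C * f (x + t • v) * ‖v‖ :=
          ContinuousLinearMap.le_of_opNorm_le _ hone v
      _ = C * ‖v‖ * ‖f (x + t • v)‖ + 0 := by rw [Real.norm_of_nonneg (hf.nonneg _)]; ring
  have hgronwall := norm_le_gronwallBound_of_norm_deriv_right_le
    (fun t _ => (hderiv t).continuousAt.continuousWithinAt)
    (fun t _ => (hderiv t).hasDerivWithinAt) le_rfl (fun t _ => hbound t)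
    1 (Set.right_mem_Icc.2 zero_le_one)
  simpa [gronwallBound_ε0, abs_of_nonneg, hf.nonneg] using hgronwall

theorem apply_add_le_of_norm_le (hf : DominatesDerivs N C f) (hN : N ≠ 0) (hC : 0 ≤ C) {x v : F}
    {r : ℝ} (hv : ‖v‖ ≤ r) : f (x + v) ≤ f x * exp (C * r) := by
  have := hf.nonneg x
  exact (hf.apply_add_le hN x v).trans (by gcongr)

theorem norm_iteratedFDeriv_add_le (hf : DominatesDerivs N C f) (hN : N ≠ 0) (hC : 0 ≤ C) {k : ℕ}
    (hk : k ≤ N) {x v : F} {r : ℝ} (hv : ‖v‖ ≤ r) :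
    ‖iteratedFDeriv ℝ k f (x + v)‖ ≤ C * (f x * exp (C * r)) :=
  (hf.norm_iteratedFDeriv_le k hk _).trans <|
    mul_le_mul_of_nonneg_left (hf.apply_add_le_of_norm_le hN hC hv) hC

theorem apply_add_le_fderiv_add (hf : DominatesDerivs N C f) (hN : 2 ≤ N) (hC : 0 ≤ C) (x v : F) :
    f (x + v) ≤ f x + fderiv ℝ f x v + C * (f x * exp (C * ‖v‖)) / 2 * ‖v‖ ^ 2 := by
  have htaylor := le_sum_iteratedFDeriv_add_of_norm_le (m := 1)
    (hf.contDiff.of_le (by exact_mod_cast hN)) fun t ht =>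
      hf.norm_iteratedFDeriv_add_le (x := x) (v := t • v) (r := ‖v‖) (by omega) hC hN <| by
        rw [norm_smul, Real.norm_of_nonneg ht.1.le]
        exact mul_le_of_le_one_left (norm_nonneg v) ht.2.le
  simp only [Finset.sum_range_succ, Finset.sum_range_zero, iteratedFDeriv_zero_apply,
    iteratedFDeriv_one_apply] at htaylor
  norm_num at htaylor
  linarith

theorem apply_add_add_apply_sub_le (hf : DominatesDerivs N C f) (hN : 4 ≤ N) (hC : 0 ≤ C)
    (x v : F) :
    f (x + v) + f (x - v) ≤ 2 * f x + iteratedFDeriv ℝ 2 f x (fun _ => v)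
      + C * (f x * exp (C * ‖v‖)) / 12 * ‖v‖ ^ 4 :=
  add_sub_le_of_norm_iteratedFDeriv_four_le (hf.contDiff.of_le (by exact_mod_cast hN))
    fun _ hw => hf.norm_iteratedFDeriv_add_le (by omega) hC hN hw

theorem apply_add_smul_add_apply_sub_smul_le (hf : DominatesDerivs N C f) (hN : 4 ≤ N) (hC : 0 ≤ C)
    (x v : F) (σ : ℝ) :
    f (x + σ • v) + f (x - σ • v) ≤ 2 * f x + σ ^ 2 * iteratedFDeriv ℝ 2 f x (fun _ => v)
      + C * f x / 12 * σ ^ 4 * (‖v‖ ^ 4 * exp (C * |σ| * ‖v‖)) := by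
  have hhom : iteratedFDeriv ℝ 2 f x (fun _ => σ • v)
      = σ ^ 2 * iteratedFDeriv ℝ 2 f x fun _ => v := by
    simpa using (iteratedFDeriv ℝ 2 f x).map_smul_univ (fun _ => σ) (fun _ => v)
  refine (hf.apply_add_add_apply_sub_le hN hC x (σ • v)).trans_eq ?_
  rw [hhom, norm_smul, Real.norm_eq_abs, mul_pow, Even.pow_abs (by decide)]
  ring_nf

end DominatesDerivs

end DominatesDerivs

section Laplacian

variable {E : Type*} [NormedAddCommGroup E] [InnerProductSpace ℝ E]

theorem apply_self_eq_sum_orthonormalBasis {ι : Type*} [Fintype ι] (b : OrthonormalBasis ι ℝ E)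
    (B : E →L[ℝ] E →L[ℝ] ℝ) (ξ : E) :
    B ξ ξ = ∑ i, ∑ j, ⟪b i, ξ⟫ * ⟪b j, ξ⟫ * B (b i) (b j) := by
  conv_lhs => rw [← b.sum_repr' ξ]
  simp only [map_sum, map_smul, sum_apply, smul_apply, smul_eq_mul, Finset.mul_sum]
  rw [Finset.sum_comm]
  exact Finset.sum_congr rfl fun i _ => Finset.sum_congr rfl fun j _ => by ring

variable [FiniteDimensional ℝ E]

theorem norm_gradient_eq_norm_fderiv (f : E → ℝ) (x : E) : ‖∇ f x‖ = ‖fderiv ℝ f x‖ := by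
  simp [gradient]

theorem laplacian_sub_laplacian_le (f g : E → ℝ) (x y : E) :
    Δ f x - Δ g y ≤ finrank ℝ E * ‖iteratedFDeriv ℝ 2 f x - iteratedFDeriv ℝ 2 g y‖ := by
  set b := stdOrthonormalBasis ℝ E
  set T := iteratedFDeriv ℝ 2 f x - iteratedFDeriv ℝ 2 g y with hT
  calc Δ f x - Δ g y = ∑ i, T ![b i, b i] := by
        simp only [laplacian_eq_iteratedFDeriv_orthonormalBasis _ b, ← Finset.sum_sub_distrib, hT,
          sub_apply]
    _ ≤ ∑ _i : Fin (finrank ℝ E), ‖T‖ := Finset.sum_le_sum fun i _ => by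
        simpa [Fin.prod_univ_two] using (le_abs_self _).trans (T.le_opNorm ![b i, b i])
    _ = finrank ℝ E * ‖T‖ := by simp

theorem laplacian_le_finrank_mul_norm (f : E → ℝ) (x : E) :
    Δ f x ≤ finrank ℝ E * ‖iteratedFDeriv ℝ 2 f x‖ := by
  have hzero := laplacian_sub_laplacian_le f (fun _ => 0) x x
  rw [laplacian_const] at hzero
  simpa using hzero

theorem fderiv_comp_eq_deriv_smul {F : Type*} [NormedAddCommGroup F] [NormedSpace ℝ F] {g : ℝ → ℝ}
    {f : F → ℝ} {x : F} (hg : DifferentiableAt ℝ g (f x)) (hf : DifferentiableAt ℝ f x) :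
    fderiv ℝ (g ∘ f) x = deriv g (f x) • fderiv ℝ f x :=
  (hg.hasDerivAt.comp_hasFDerivAt x hf.hasFDerivAt).fderiv

theorem fderiv_fderiv_comp_apply {F : Type*} [NormedAddCommGroup F] [NormedSpace ℝ F] {g : ℝ → ℝ}
    {f : F → ℝ} (hg : ContDiff ℝ 2 g) (hf : ContDiff ℝ 2 f) (x v w : F) :
    fderiv ℝ (fderiv ℝ (g ∘ f)) x v w = deriv g (f x) * fderiv ℝ (fderiv ℝ f) x v w
      + deriv (deriv g) (f x) * (fderiv ℝ f x v * fderiv ℝ f x w) := by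
  have hg' : Differentiable ℝ (deriv g) :=
    (contDiff_one_iff_deriv.1 ((contDiff_succ_iff_deriv (n := 1)).1 hg).2.2).1
  have hf' : Differentiable ℝ (fderiv ℝ f) :=
    (hf.fderiv_right (m := 1) le_rfl).differentiable one_ne_zero
  have hdf : Differentiable ℝ f := hf.differentiable two_ne_zero
  have hfirst : fderiv ℝ (g ∘ f) = fun y => deriv g (f y) • fderiv ℝ f y := by
    ext1 y
    exact fderiv_comp_eq_deriv_smul (hg.differentiable two_ne_zero _) (hdf y)
  have hsecond := (((hg' (f x)).hasDerivAt.comp_hasFDerivAt x (hdf x).hasFDerivAt).smul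
    (hf' x).hasFDerivAt).fderiv
  rw [hfirst]
  refine (DFunLike.congr_fun (DFunLike.congr_fun hsecond v) w).trans ?_
  simp
  ring

theorem inner_gradient_gradient_comp {g : ℝ → ℝ} {f : E → ℝ} {x : E}
    (hg : DifferentiableAt ℝ g (f x)) (hf : DifferentiableAt ℝ f x) :
    ⟪∇ f x, ∇ (g ∘ f) x⟫ = deriv g (f x) * ‖∇ f x‖ ^ 2 := by
  rw [real_inner_comm, inner_gradient_left, fderiv_comp_eq_deriv_smul hg hf, smul_apply,
    smul_eq_mul, ← inner_gradient_left, real_inner_self_eq_norm_sq]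

theorem laplacian_comp {g : ℝ → ℝ} {f : E → ℝ} (hg : ContDiff ℝ 2 g) (hf : ContDiff ℝ 2 f) (x : E) :
    Δ (g ∘ f) x = deriv g (f x) * Δ f x + deriv (deriv g) (f x) * ‖∇ f x‖ ^ 2 := by
  set b := stdOrthonormalBasis ℝ E
  have hgrad : ‖∇ f x‖ ^ 2 = ∑ i, fderiv ℝ f x (b i) ^ 2 := by
    simp [← b.sum_sq_norm_inner_right]
  simp only [laplacian_eq_iteratedFDeriv_orthonormalBasis _ b, iteratedFDeriv_two_apply, hgrad,
    Finset.mul_sum, ← Finset.sum_add_distrib]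
  exact Finset.sum_congr rfl fun i _ => by
    simpa [pow_two] using fderiv_fderiv_comp_apply hg hf x (b i) (b i)

theorem DominatesDerivs.norm_gradient_le {N : ℕ} {C : ℝ} {f : E → ℝ} (hf : DominatesDerivs N C f)
    (hN : N ≠ 0) (x : E) : ‖∇ f x‖ ≤ C * f x := by
  rw [norm_gradient_eq_norm_fderiv, ← norm_iteratedFDeriv_one]
  exact hf.norm_iteratedFDeriv_le 1 (Nat.one_le_iff_ne_zero.2 hN) x

theorem DominatesDerivs.laplacian_le {N : ℕ} {C : ℝ} {f : E → ℝ} (hf : DominatesDerivs N C f)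
    (hN : 2 ≤ N) (x : E) : Δ f x ≤ finrank ℝ E * (C * f x) :=
  (laplacian_le_finrank_mul_norm f x).trans <| by
    gcongr
    exact hf.norm_iteratedFDeriv_le 2 hN x

theorem DominatesDerivs.laplacian_add_le {N : ℕ} {C : ℝ} {f : E → ℝ} (hf : DominatesDerivs N C f)
    (hN : 3 ≤ N) (hC : 0 ≤ C) (x v : E) :
    Δ f (x + v) ≤ Δ f x + finrank ℝ E * (C * (f x * exp (C * ‖v‖)) * ‖v‖) := by
  have hlip : ‖iteratedFDeriv ℝ 2 f (x + v) - iteratedFDeriv ℝ 2 f x‖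
      ≤ C * (f x * exp (C * ‖v‖)) * ‖x + v - x‖ := by
    refine (convex_closedBall x ‖v‖).norm_image_sub_le_of_norm_fderiv_le (𝕜 := ℝ)
      (fun z _ => hf.contDiff.differentiable_iteratedFDeriv (by exact_mod_cast hN) z)
      (fun z hz => ?_) (by simp) (by simp)
    rw [norm_fderiv_iteratedFDeriv]
    simpa using hf.norm_iteratedFDeriv_add_le (x := x) (v := z - x) (by omega) hC hN
      (by simpa [dist_eq_norm] using hz)
  rw [add_sub_cancel_left] at hlip
  have hdiff := (laplacian_sub_laplacian_le f f (x + v) x).trans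
    (mul_le_mul_of_nonneg_left hlip (Nat.cast_nonneg _))
  linarith

end Laplacian

section Gaussian

variable {E : Type*} [NormedAddCommGroup E] [InnerProductSpace ℝ E] [FiniteDimensional ℝ E]
  [MeasurableSpace E] [BorelSpace E]

theorem integrable_exp_neg_norm_sq_div_two : Integrable fun ξ : E => exp (-‖ξ‖ ^ 2 / 2) := by
  refine Integrable.of_integral_ne_zero ?_
  simp_rw [show ∀ ξ : E, -‖ξ‖ ^ 2 / 2 = -(1 / 2) * ‖ξ‖ ^ 2 from fun ξ => by ring]
  rw [GaussianFourier.integral_rexp_neg_mul_sq_norm one_half_pos]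
  positivity

theorem charFun_withDensity_exp_neg_norm_sq_div_two (t : E) :
    charFun (volume.withDensity fun ξ : E =>
        ENNReal.ofReal ((2 * π) ^ (-(finrank ℝ E : ℝ) / 2) * exp (-‖ξ‖ ^ 2 / 2))) t
      = Complex.exp (-‖t‖ ^ 2 / 2) := by
  have hintegrand (ξ : E) :
      (ENNReal.ofReal ((2 * π) ^ (-(finrank ℝ E : ℝ) / 2) * exp (-‖ξ‖ ^ 2 / 2))).toReal
          • Complex.exp (⟪ξ, t⟫ * Complex.I)
        = ((2 * π) ^ (-(finrank ℝ E : ℝ) / 2) : ℝ)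
          * Complex.exp (-(1 / 2 : ℂ) * ‖ξ‖ ^ 2 + Complex.I * ⟪t, ξ⟫) := by
    rw [ENNReal.toReal_ofReal (by positivity), Complex.real_smul, Complex.ofReal_mul,
      Complex.ofReal_exp, mul_assoc, ← Complex.exp_add, real_inner_comm]
    push_cast
    ring_nf
  have hnormalization : (((2 * π) ^ (-(finrank ℝ E : ℝ) / 2) : ℝ) : ℂ)
      * (π / (1 / 2 : ℂ)) ^ ((finrank ℝ E : ℂ) / 2) = 1 := by
    have hcast : (π / (1 / 2 : ℂ)) ^ ((finrank ℝ E : ℂ) / 2)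
        = ((2 * π) ^ ((finrank ℝ E : ℝ) / 2) : ℝ) := by
      rw [Complex.ofReal_cpow two_pi_pos.le]
      push_cast
      ring_nf
    rw [hcast, ← Complex.ofReal_mul, ← rpow_add two_pi_pos]
    simp [neg_div]
  rw [charFun_apply, integral_withDensity_eq_integral_toReal_smul (by fun_prop) (by simp)]
  simp_rw [hintegrand]
  rw [integral_const_mul,
    GaussianFourier.integral_cexp_neg_mul_sq_norm_add (by norm_num) Complex.I t, ← mul_assoc,
    hnormalization, one_mul, Complex.I_sq]
  ring_nf

theorem withDensity_exp_neg_norm_sq_div_two_eq_stdGaussian :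
    (volume.withDensity fun ξ : E =>
        ENNReal.ofReal ((2 * π) ^ (-(finrank ℝ E : ℝ) / 2) * exp (-‖ξ‖ ^ 2 / 2)))
      = ProbabilityTheory.stdGaussian E := by
  have : IsFiniteMeasure (volume.withDensity fun ξ : E =>
      ENNReal.ofReal ((2 * π) ^ (-(finrank ℝ E : ℝ) / 2) * exp (-‖ξ‖ ^ 2 / 2))) :=
    isFiniteMeasure_withDensity_ofReal (integrable_exp_neg_norm_sq_div_two.const_mul _).2
  refine Measure.ext_of_charFun ?_
  ext t
  rw [charFun_withDensity_exp_neg_norm_sq_div_two, ProbabilityTheory.charFun_stdGaussian]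

instance isNegInvariant_stdGaussian : (ProbabilityTheory.stdGaussian E).IsNegInvariant :=
  ⟨ProbabilityTheory.stdGaussian_map (LinearIsometryEquiv.neg ℝ)⟩

theorem integrable_exp_mul_norm_of_isGaussian {F : Type*} [NormedAddCommGroup F] [NormedSpace ℝ F]
    [CompleteSpace F] [SecondCountableTopology F] [MeasurableSpace F] [BorelSpace F]
    (μ : Measure F) [ProbabilityTheory.IsGaussian μ] (a : ℝ) :
    Integrable (fun ξ => exp (a * ‖ξ‖)) μ := by
  obtain ⟨c, hc, hexp⟩ := ProbabilityTheory.IsGaussian.exists_integrable_exp_sq μ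
  refine (hexp.const_mul (exp (a ^ 2 / (4 * c)))).mono' (by fun_prop) (.of_forall fun ξ => ?_)
  have hsquare : a ^ 2 / (4 * c) + c * ‖ξ‖ ^ 2 - a * ‖ξ‖ = (a - 2 * c * ‖ξ‖) ^ 2 / (4 * c) := by
    field_simp
    ring
  have hnonneg : 0 ≤ (a - 2 * c * ‖ξ‖) ^ 2 / (4 * c) := by positivity
  rw [Real.norm_of_nonneg (exp_nonneg _), ← exp_add]
  exact exp_le_exp.2 (by linarith)

theorem integrable_norm_pow_mul_exp_of_isGaussian {F : Type*} [NormedAddCommGroup F]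
    [NormedSpace ℝ F] [CompleteSpace F] [SecondCountableTopology F] [MeasurableSpace F]
    [BorelSpace F] (μ : Measure F) [ProbabilityTheory.IsGaussian μ] (k : ℕ) (a : ℝ) :
    Integrable (fun ξ => ‖ξ‖ ^ k * exp (a * ‖ξ‖)) μ := by
  simpa using ProbabilityTheory.integrable_pow_abs_mul_exp_of_integrable_exp_mul one_ne_zero
    (integrable_exp_mul_norm_of_isGaussian μ (a + 1))
    (integrable_exp_mul_norm_of_isGaussian μ (a - 1)) k

theorem integrable_inner_mul_inner_stdGaussian (u v : E) :
    Integrable (fun ξ => ⟪u, ξ⟫ * ⟪v, ξ⟫) (ProbabilityTheory.stdGaussian E) :=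
  (ProbabilityTheory.IsGaussian.memLp_two_id.const_inner u).integrable_mul
    (ProbabilityTheory.IsGaussian.memLp_two_id.const_inner v)

theorem integral_inner_mul_inner_stdGaussian (u v : E) :
    ∫ ξ, ⟪u, ξ⟫ * ⟪v, ξ⟫ ∂ProbabilityTheory.stdGaussian E = ⟪u, v⟫ := by
  have hcenter (w : E) : ∫ ξ, ⟪w, ξ⟫ ∂ProbabilityTheory.stdGaussian E = 0 :=
    ProbabilityTheory.integral_strongDual_stdGaussian (innerSL ℝ w)
  have hcov := DFunLike.congr_fun (DFunLike.congr_fun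
    (ProbabilityTheory.covarianceBilin_stdGaussian (E := E)) u) v
  rw [ProbabilityTheory.covarianceBilin_apply_eq_cov ProbabilityTheory.IsGaussian.memLp_two_id,
    ProbabilityTheory.covariance, hcenter, hcenter] at hcov
  simp only [sub_zero] at hcov
  exact hcov

theorem integrable_apply_self_stdGaussian (B : E →L[ℝ] E →L[ℝ] ℝ) :
    Integrable (fun ξ => B ξ ξ) (ProbabilityTheory.stdGaussian E) := by
  simp_rw [apply_self_eq_sum_orthonormalBasis (stdOrthonormalBasis ℝ E) B]
  exact integrable_finsetSum _ fun i _ => integrable_finsetSum _ fun j _ =>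
    (integrable_inner_mul_inner_stdGaussian _ _).mul_const _

theorem integral_apply_self_stdGaussian {ι : Type*} [Fintype ι] (b : OrthonormalBasis ι ℝ E)
    (B : E →L[ℝ] E →L[ℝ] ℝ) :
    ∫ ξ, B ξ ξ ∂ProbabilityTheory.stdGaussian E = ∑ i, B (b i) (b i) := by
  classical
  have hint (i j : ι) := (integrable_inner_mul_inner_stdGaussian (b i) (b j)).mul_const
    (B (b i) (b j))
  simp_rw [apply_self_eq_sum_orthonormalBasis b B]
  rw [integral_finsetSum _ fun i _ => integrable_finsetSum _ fun j _ => hint i j]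
  simp_rw [integral_finsetSum _ fun j _ => hint _ j, integral_mul_const,
    integral_inner_mul_inner_stdGaussian, b.inner_eq_ite]
  simp

theorem integrable_iteratedFDeriv_two_stdGaussian (f : E → ℝ) (y : E) :
    Integrable (fun ξ => iteratedFDeriv ℝ 2 f y fun _ => ξ) (ProbabilityTheory.stdGaussian E) := by
  simpa only [iteratedFDeriv_two_apply] using integrable_apply_self_stdGaussian _

theorem integral_iteratedFDeriv_two_stdGaussian (f : E → ℝ) (y : E) :
    ∫ ξ, iteratedFDeriv ℝ 2 f y (fun _ => ξ) ∂ProbabilityTheory.stdGaussian E = Δ f y := by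
  rw [laplacian_eq_iteratedFDeriv_stdOrthonormalBasis]
  simpa [iteratedFDeriv_two_apply] using
    integral_apply_self_stdGaussian (stdOrthonormalBasis ℝ E) (fderiv ℝ (fderiv ℝ f) y)

variable (E) in
/-- The moment `𝔼[‖ξ‖ᵏ exp(a‖ξ‖)]` of a standard Gaussian vector `ξ` in `E`, which controls the
Taylor remainders of functions of exponential growth. -/
def gaussianExpMoment (k : ℕ) (a : ℝ) : ℝ :=
  ∫ ξ, ‖ξ‖ ^ k * exp (a * ‖ξ‖) ∂ProbabilityTheory.stdGaussian E

omit [BorelSpace E] in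
theorem gaussianExpMoment_nonneg (k : ℕ) (a : ℝ) : 0 ≤ gaussianExpMoment E k a :=
  integral_nonneg fun _ => by positivity

theorem gaussianExpMoment_mono (k : ℕ) : Monotone (gaussianExpMoment E k) := fun a b hab =>
  integral_mono (integrable_norm_pow_mul_exp_of_isGaussian _ k a)
    (integrable_norm_pow_mul_exp_of_isGaussian _ k b) fun ξ => by
      dsimp only
      gcongr

end Gaussian

section EulerStep

variable {E : Type*} [NormedAddCommGroup E] [InnerProductSpace ℝ E] [FiniteDimensional ℝ E]
  [MeasurableSpace E] [BorelSpace E] {N : ℕ} {C : ℝ} {f : E → ℝ}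

namespace DominatesDerivs

theorem integrable_comp_add_smul (hf : DominatesDerivs N C f) (hN : N ≠ 0) (y : E) (σ : ℝ) :
    Integrable (fun ξ => f (y + σ • ξ)) (ProbabilityTheory.stdGaussian E) := by
  have hcont := hf.contDiff.continuous
  refine ((integrable_exp_mul_norm_of_isGaussian _ (C * |σ|)).const_mul (f y)).mono'
    (by fun_prop) (.of_forall fun ξ => ?_)
  rw [Real.norm_of_nonneg (hf.nonneg _), mul_assoc, ← Real.norm_eq_abs, ← norm_smul]
  exact hf.apply_add_le hN y (σ • ξ)

theorem integral_comp_add_smul_le (hf : DominatesDerivs N C f) (hN : 4 ≤ N) (hC : 0 ≤ C) (y : E)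
    (σ : ℝ) :
    ∫ ξ, f (y + σ • ξ) ∂ProbabilityTheory.stdGaussian E
      ≤ f y + σ ^ 2 / 2 * Δ f y
        + C * f y / 24 * σ ^ 4 * gaussianExpMoment E 4 (C * |σ|) := by
  have hplus := hf.integrable_comp_add_smul (by omega) y σ
  have hminus : Integrable (fun ξ => f (y - σ • ξ)) (ProbabilityTheory.stdGaussian E) := by
    simpa [sub_eq_add_neg] using hf.integrable_comp_add_smul (by omega) y (-σ)
  have hreflect : ∫ ξ, f (y - σ • ξ) ∂ProbabilityTheory.stdGaussian E
      = ∫ ξ, f (y + σ • ξ) ∂ProbabilityTheory.stdGaussian E := by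
    simpa [sub_eq_add_neg] using
      integral_neg_eq_self (fun ξ => f (y + σ • ξ)) (ProbabilityTheory.stdGaussian E)
  have hconst : Integrable (fun _ => 2 * f y) (ProbabilityTheory.stdGaussian E) :=
    integrable_const _
  have hhess := (integrable_iteratedFDeriv_two_stdGaussian f y).const_mul (σ ^ 2)
  have hrem := (integrable_norm_pow_mul_exp_of_isGaussian (ProbabilityTheory.stdGaussian E) 4
    (C * |σ|)).const_mul (C * f y / 12 * σ ^ 4)
  have hmoment : ∫ ξ, ‖ξ‖ ^ 4 * exp (C * |σ| * ‖ξ‖) ∂ProbabilityTheory.stdGaussian E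
      = gaussianExpMoment E 4 (C * |σ|) := rfl
  have hmono := integral_mono (hplus.add hminus) ((hconst.add hhess).add hrem) fun ξ =>
    hf.apply_add_smul_add_apply_sub_smul_le hN hC y ξ σ
  rw [integral_add' hplus hminus, hreflect, integral_add' (hconst.add hhess) hrem,
    integral_add' hconst hhess, integral_const, probReal_univ, one_smul, integral_const_mul,
    integral_iteratedFDeriv_two_stdGaussian, integral_const_mul, hmoment] at hmono
  linarith

theorem integral_euler_step_le (hf : DominatesDerivs N C f) (hN : 4 ≤ N) (hC : 0 ≤ C)
    {κ h R : ℝ} (hκ : 0 ≤ κ) (hh : 0 ≤ h) (hh1 : h ≤ 1) (x : E) {b : E} (hb : h * ‖b‖ ≤ R) :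
    ∫ ξ, f (x + h • b + √(2 * κ * h) • ξ) ∂ProbabilityTheory.stdGaussian E
      ≤ f x + h * (κ * Δ f x + fderiv ℝ f x b)
        + C * exp (C * R) * (‖b‖ ^ 2 / 2 + κ * finrank ℝ E * ‖b‖
          + κ ^ 2 / 6 * gaussianExpMoment E 4 (C * √(2 * κ))) * h ^ 2 * f x := by
  set M := gaussianExpMoment E 4 (C * √(2 * κ))
  set σ := √(2 * κ * h)
  have hfx := hf.nonneg x
  have hσ2 : σ ^ 2 = 2 * κ * h := sq_sqrt (by positivity)
  have hσ4 : σ ^ 4 = (2 * κ * h) ^ 2 := by rw [← hσ2]; ring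
  have hnorm : ‖h • b‖ = h * ‖b‖ := by rw [norm_smul, Real.norm_of_nonneg hh]
  have hexp : f x * exp (C * ‖h • b‖) ≤ f x * exp (C * R) := by rw [hnorm]; gcongr
  have hmoment : gaussianExpMoment E 4 (C * |σ|) ≤ M := by
    refine gaussianExpMoment_mono 4 (mul_le_mul_of_nonneg_left ?_ hC)
    rw [abs_of_nonneg (sqrt_nonneg _)]
    exact sqrt_le_sqrt (mul_le_of_le_one_right (by positivity) hh1)
  have hnoise := hf.integral_comp_add_smul_le hN hC (x + h • b) σ
  have hvalue : f (x + h • b)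
      ≤ f x + h * fderiv ℝ f x b + C * (f x * exp (C * R)) / 2 * (h * ‖b‖) ^ 2 := by
    have htaylor := hf.apply_add_le_fderiv_add (by omega) hC x (h • b)
    rw [map_smul, smul_eq_mul] at htaylor
    refine htaylor.trans ?_
    rw [hnorm] at hexp ⊢
    gcongr
  have hlaplacian : Δ f (x + h • b)
      ≤ Δ f x + finrank ℝ E * (C * (f x * exp (C * R)) * (h * ‖b‖)) := by
    refine (hf.laplacian_add_le (by omega) hC x (h • b)).trans ?_
    rw [hnorm] at hexp ⊢
    gcongr
  have hremainder : C * f (x + h • b) / 24 * σ ^ 4 * gaussianExpMoment E 4 (C * |σ|)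
      ≤ C * (f x * exp (C * R)) / 24 * (2 * κ * h) ^ 2 * M := by
    rw [hσ4]
    have hgrowth := (hf.apply_add_le (by omega) x (h • b)).trans hexp
    have := gaussianExpMoment_nonneg (E := E) 4 (C * |σ|)
    gcongr
  have hdiffusion := mul_le_mul_of_nonneg_left hlaplacian (mul_nonneg hκ hh)
  rw [hσ2] at hnoise
  linarith

end DominatesDerivs

end EulerStep

section LangevinGenerator

variable {E : Type*} [NormedAddCommGroup E] [InnerProductSpace ℝ E] [FiniteDimensional ℝ E]
  {β c d : ℝ} {U : E → ℝ} {x : E}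

/-- The generator `β⁻¹ Δ - ∇U · ∇` of the overdamped Langevin diffusion
`dX = -∇U(X) dt + √(2β⁻¹) dW`. -/
def langevinGenerator (β : ℝ) (U f : E → ℝ) (x : E) : ℝ :=
  β⁻¹ * Δ f x - ⟪∇ U x, ∇ f x⟫

theorem langevinGenerator_comp_self {g : ℝ → ℝ} (hg : ContDiff ℝ 2 g) (hU : ContDiff ℝ 2 U) :
    langevinGenerator β U (g ∘ U) x = deriv g (U x) * (β⁻¹ * Δ U x - ‖∇ U x‖ ^ 2)
      + β⁻¹ * deriv (deriv g) (U x) * ‖∇ U x‖ ^ 2 := by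
  rw [langevinGenerator, laplacian_comp hg hU, inner_gradient_gradient_comp
    (hg.differentiable two_ne_zero _) (hU.differentiable two_ne_zero _)]
  ring

theorem langevinGenerator_comp_self_le (hβ : 0 < β) {g : ℝ → ℝ} (hg : ContDiff ℝ 2 g)
    (hU : ContDiff ℝ 2 U) (hderiv : 0 ≤ deriv g (U x))
    (hderiv2 : deriv (deriv g) (U x) ≤ (β - c) * deriv g (U x))
    (hdrift : Δ U x ≤ c * ‖∇ U x‖ ^ 2 - d * U x) :
    langevinGenerator β U (g ∘ U) x ≤ -(β⁻¹ * d) * (deriv g (U x) * U x) := by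
  rw [langevinGenerator_comp_self hg hU]
  calc deriv g (U x) * (β⁻¹ * Δ U x - ‖∇ U x‖ ^ 2) + β⁻¹ * deriv (deriv g) (U x) * ‖∇ U x‖ ^ 2
      ≤ deriv g (U x) * (β⁻¹ * (c * ‖∇ U x‖ ^ 2 - d * U x) - ‖∇ U x‖ ^ 2)
        + β⁻¹ * ((β - c) * deriv g (U x)) * ‖∇ U x‖ ^ 2 := by gcongr
    _ = -(β⁻¹ * d) * (deriv g (U x) * U x) := by field_simp; ring

theorem langevinGenerator_pow_self_le (hβ : 0 < β) (hU : ContDiff ℝ 2 U) (hUx : 0 < U x) {ℓ : ℕ}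
    (hℓ : (ℓ - 1 : ℝ) ≤ (β - c) * U x) (hdrift : Δ U x ≤ c * ‖∇ U x‖ ^ 2 - d * U x) :
    langevinGenerator β U (U ^ ℓ) x ≤ -(β⁻¹ * d) * (ℓ * U x ^ ℓ) := by
  have hderiv (n : ℕ) : deriv (fun u : ℝ => u ^ n) = fun u : ℝ => n * u ^ (n - 1) :=
    funext fun _ => deriv_pow_field n
  have hderiv2 : deriv (deriv fun u : ℝ => u ^ ℓ) (U x)
      = ℓ * ((ℓ - 1 : ℕ) * U x ^ (ℓ - 1 - 1)) := by
    rw [hderiv, deriv_const_mul_field, hderiv]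
  have hlower (n : ℕ) : n * U x ^ (n - 1) * U x = n * U x ^ n := by
    cases n <;> simp [pow_succ, mul_assoc]
  have hpred : (ℓ : ℝ) * (ℓ - 1 : ℕ) = ℓ * (ℓ - 1) := by cases ℓ <;> simp
  have hconvex : deriv (deriv fun u : ℝ => u ^ ℓ) (U x)
      ≤ (β - c) * deriv (fun u : ℝ => u ^ ℓ) (U x) := by
    rw [hderiv2, hderiv]
    refine le_of_mul_le_mul_right ?_ hUx
    calc (ℓ : ℝ) * ((ℓ - 1 : ℕ) * U x ^ (ℓ - 1 - 1)) * U x = ℓ * U x ^ (ℓ - 1) * (ℓ - 1) := by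
          rw [mul_assoc, hlower, ← mul_assoc, hpred]; ring
      _ ≤ ℓ * U x ^ (ℓ - 1) * ((β - c) * U x) := by gcongr
      _ = (β - c) * (ℓ * U x ^ (ℓ - 1)) * U x := by ring
  have hbound := langevinGenerator_comp_self_le hβ
    (show ContDiff ℝ 2 fun u : ℝ => u ^ ℓ by fun_prop) hU
    (by rw [hderiv]; positivity) hconvex hdrift
  rwa [hderiv, hlower] at hbound

theorem langevinGenerator_pow_self_le_of_dominatesDerivs {N ℓ : ℕ} {A : ℝ} (hβ : 0 ≤ β)
    (hU : DifferentiableAt ℝ U x) (hUx : 0 ≤ U x) (hpow : DominatesDerivs N A (U ^ ℓ))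
    (hN : 2 ≤ N) : langevinGenerator β U (U ^ ℓ) x ≤ β⁻¹ * finrank ℝ E * A * U x ^ ℓ := by
  have hinner : ⟪∇ U x, ∇ (U ^ ℓ) x⟫ = ℓ * U x ^ (ℓ - 1) * ‖∇ U x‖ ^ 2 := by
    rw [show U ^ ℓ = (fun u => u ^ ℓ) ∘ U from rfl,
      inner_gradient_gradient_comp (differentiableAt_pow ℓ) hU, deriv_pow_field]
  have hlaplacian := mul_le_mul_of_nonneg_left (hpow.laplacian_le hN x) (inv_nonneg.2 hβ)
  rw [Pi.pow_apply] at hlaplacian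
  have hdissipation : 0 ≤ ℓ * U x ^ (ℓ - 1) * ‖∇ U x‖ ^ 2 := by positivity
  rw [langevinGenerator, hinner]
  linarith

theorem exists_langevinGenerator_pow_self_le {N : ℕ} {C R : ℝ} (hβ : 0 < β) (hc : c < β)
    (hd : 0 < d) (hU : DominatesDerivs N C U) (hN : 2 ≤ N) (hone : ∀ x, 1 ≤ U x)
    (hdrift : ∀ x, R < U x → Δ U x ≤ c * ‖∇ U x‖ ^ 2 - d * U x) (ℓ : ℕ) :
    ∃ γ > 0, ∃ K > 0, ∀ x, langevinGenerator β U (U ^ ℓ) x ≤ -γ * U x ^ ℓ + K := by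
  have hC2 : ContDiff ℝ 2 U := hU.contDiff.of_le (by exact_mod_cast hN)
  set A := (2 ^ N * C) ^ ℓ
  have hA : 0 ≤ A := by
    have hC := hU.one_le_const (zero_lt_one.trans_le (hone 0))
    positivity
  set S := max (max R 1) ((ℓ - 1) / (β - c))
  have hS : 1 ≤ S := (le_max_right _ _).trans (le_max_left _ _)
  set K := (β⁻¹ * d + β⁻¹ * finrank ℝ E * A) * S ^ ℓ
  have hK : β⁻¹ * d ≤ K :=
    (le_add_of_nonneg_right (by positivity)).trans
      (le_mul_of_one_le_right (by positivity) (one_le_pow₀ hS))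
  refine ⟨β⁻¹ * d, by positivity, K, by positivity, fun x => ?_⟩
  have hUx : 0 < U x := zero_lt_one.trans_le (hone x)
  rcases le_or_gt (U x) S with hlow | hhigh
  · have hcrude := langevinGenerator_pow_self_le_of_dominatesDerivs hβ.le
      (hC2.differentiable two_ne_zero x) hUx.le (hU.pow ℓ) hN
    have hsublevel : (β⁻¹ * d + β⁻¹ * finrank ℝ E * A) * U x ^ ℓ ≤ K :=
      mul_le_mul_of_nonneg_left (pow_le_pow_left₀ hUx.le hlow ℓ) (by positivity)
    linarith
  · obtain ⟨hRone, hℓ⟩ := max_lt_iff.1 hhigh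
    rw [div_lt_iff₀' (sub_pos.2 hc)] at hℓ
    have hsharp := langevinGenerator_pow_self_le hβ hC2 hUx hℓ.le
      (hdrift x ((le_max_left _ _).trans_lt hRone))
    have hcount : U x ^ ℓ ≤ ℓ * U x ^ ℓ + 1 := by
      rcases ℓ with _ | m
      · simp
      · have : 0 ≤ m * U x ^ (m + 1) := by positivity
        push_cast
        linarith
    have hscaled : β⁻¹ * d * U x ^ ℓ ≤ β⁻¹ * d * (ℓ * U x ^ ℓ + 1) := by gcongr
    linarith

end LangevinGenerator

section LocalDrift

theorem add_mul_le_exp_mul_add {γ K a h : ℝ} (hγ : 0 < γ) (hK : 0 ≤ K) (ha : 0 ≤ a) (hh : 0 ≤ h)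
    (hh1 : h ≤ 1) :
    a + h * (-γ * a + K) ≤ exp (-γ * h) * a + K * exp γ / γ * (1 - exp (-γ * h)) := by
  have hcontraction : (1 - γ * h) * a ≤ exp (-γ * h) * a := by
    gcongr
    linarith [add_one_le_exp (-γ * h)]
  have hgap : exp (-γ) * (γ * h) ≤ 1 - exp (-γ * h) :=
    calc exp (-γ) * (γ * h) ≤ exp (-γ * h) * (exp (γ * h) - 1) := by
          gcongr
          · nlinarith
          · linarith [add_one_le_exp (γ * h)]
      _ = 1 - exp (-γ * h) := by rw [mul_sub, ← exp_add]; simp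
  have hsource : h * K ≤ K * exp γ / γ * (1 - exp (-γ * h)) :=
    calc h * K = K * exp γ / γ * (exp (-γ) * (γ * h)) := by rw [exp_neg]; field_simp
      _ ≤ K * exp γ / γ * (1 - exp (-γ * h)) := by gcongr
  linarith

theorem mul_sq_lt_one_of_lt_rpow_neg_half {h u : ℝ} (hh : 0 < h) (hu : 0 ≤ u)
    (hlt : u < h ^ (-(1 : ℝ) / 2)) : h * u ^ 2 < 1 := by
  have hsq : (h ^ (-(1 : ℝ) / 2)) ^ 2 = h⁻¹ := by
    rw [← rpow_mul_natCast hh.le, ← rpow_neg_one]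
    norm_num
  calc h * u ^ 2 < h * (h ^ (-(1 : ℝ) / 2)) ^ 2 := by gcongr
    _ = 1 := by rw [hsq, mul_inv_cancel₀ hh.ne']

variable {E : Type*} [NormedAddCommGroup E] [InnerProductSpace ℝ E] [FiniteDimensional ℝ E]
  [MeasurableSpace E] [BorelSpace E]

theorem DominatesDerivs.integral_gradient_step_le_langevinGenerator {N : ℕ} {A C β h : ℝ}
    {f U : E → ℝ} (hf : DominatesDerivs N A f) (hN : 4 ≤ N) (hA : 0 ≤ A) (hC : 0 ≤ C) (hβ : 0 ≤ β)
    (hh : 0 ≤ h) (hh1 : h ≤ 1) {x : E} (hgrad : ‖∇ U x‖ ≤ C * U x) (hUx : 1 ≤ U x)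
    (hhU : h * U x ≤ 1) :
    ∫ ξ, f (x - h • ∇ U x + √(2 * β⁻¹ * h) • ξ) ∂ProbabilityTheory.stdGaussian E
      ≤ f x + h * langevinGenerator β U f x
        + A * exp (A * C) * (C ^ 2 / 2 + β⁻¹ * finrank ℝ E * C
          + β⁻¹ ^ 2 / 6 * gaussianExpMoment E 4 (A * √(2 * β⁻¹))) * U x ^ 2 * h ^ 2 * f x := by
  have hstep := hf.integral_euler_step_le hN hA (inv_nonneg.2 hβ) hh hh1 x
    (b := -∇ U x) (R := C) <| by
      rw [norm_neg]
      calc h * ‖∇ U x‖ ≤ h * (C * U x) := by gcongr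
        _ = C * (h * U x) := by ring
        _ ≤ C := mul_le_of_le_one_right hC hhU
  have hgenerator : β⁻¹ * Δ f x + fderiv ℝ f x (-∇ U x) = langevinGenerator β U f x := by
    rw [langevinGenerator, map_neg, ← inner_gradient_left, real_inner_comm, sub_eq_add_neg]
  rw [smul_neg, ← sub_eq_add_neg, norm_neg, hgenerator] at hstep
  have hmoment := gaussianExpMoment_nonneg (E := E) 4 (A * √(2 * β⁻¹))
  have hfx := hf.nonneg x
  set M := gaussianExpMoment E 4 (A * √(2 * β⁻¹))
  have hdrift : ‖∇ U x‖ ^ 2 / 2 ≤ C ^ 2 / 2 * U x ^ 2 :=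
    calc ‖∇ U x‖ ^ 2 / 2 ≤ (C * U x) ^ 2 / 2 := by gcongr
      _ = C ^ 2 / 2 * U x ^ 2 := by ring
  have hdiffusion : β⁻¹ * finrank ℝ E * ‖∇ U x‖ ≤ β⁻¹ * finrank ℝ E * C * U x ^ 2 :=
    calc β⁻¹ * finrank ℝ E * ‖∇ U x‖ ≤ β⁻¹ * finrank ℝ E * (C * U x ^ 2) := by
          gcongr
          exact hgrad.trans (by gcongr; exact le_self_pow₀ hUx two_ne_zero)
      _ = β⁻¹ * finrank ℝ E * C * U x ^ 2 := by ring
  have hnoise : β⁻¹ ^ 2 / 6 * M ≤ β⁻¹ ^ 2 / 6 * M * U x ^ 2 :=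
    le_mul_of_one_le_right (by positivity) (one_le_pow₀ hUx)
  refine hstep.trans ?_
  rw [mul_assoc (A * exp (A * C)) _ (U x ^ 2)]
  gcongr
  linarith

theorem euler_local_drift_general {β c d C R : ℝ} {U : E → ℝ} (hβ : 0 < β) (hc : c < β)
    (hd : 0 < d) (hU : DominatesDerivs 4 C U) (hone : ∀ x, 1 ≤ U x)
    (hdrift : ∀ x, R < U x → Δ U x ≤ c * ‖∇ U x‖ ^ 2 - d * U x) (ℓ : ℕ) :
    ∃ γ > (0 : ℝ), ∃ K > (0 : ℝ), ∃ D > (0 : ℝ), ∀ h : ℝ, 0 < h →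
      ∀ x : E, U x < h ^ (-(1 : ℝ) / 2) →
        ∫ ξ, U (x - h • ∇ U x + √(2 * β⁻¹ * h) • ξ) ^ ℓ ∂ProbabilityTheory.stdGaussian E
          ≤ (exp (-γ * h) + D * U x ^ 2 * h ^ 2) * U x ^ ℓ + K / γ * (1 - exp (-γ * h)) := by
  obtain ⟨γ, hγ, K, hK, hlyapunov⟩ :=
    exists_langevinGenerator_pow_self_le hβ hc hd hU (by norm_num) hone hdrift ℓ
  have hC : 0 < C := zero_lt_one.trans_le (hU.one_le_const (zero_lt_one.trans_le (hone 0)))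
  obtain ⟨A, hA, hpow⟩ : ∃ A > 0, DominatesDerivs 4 A (U ^ ℓ) :=
    ⟨(2 ^ 4 * C) ^ ℓ, by positivity, hU.pow ℓ⟩
  have hmoment := gaussianExpMoment_nonneg (E := E) 4 (A * √(2 * β⁻¹))
  refine ⟨γ, hγ, K * exp γ, by positivity, A * exp (A * C) * (C ^ 2 / 2 + β⁻¹ * finrank ℝ E * C
    + β⁻¹ ^ 2 / 6 * gaussianExpMoment E 4 (A * √(2 * β⁻¹))), by positivity, fun h hh x hx => ?_⟩
  have hUx := hone x
  have hhU2 : h * U x ^ 2 < 1 := mul_sq_lt_one_of_lt_rpow_neg_half hh (by linarith) hx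
  have hhU : h * U x ≤ 1 :=
    (mul_le_mul_of_nonneg_left (le_self_pow₀ hUx two_ne_zero) hh.le).trans hhU2.le
  have hh1 : h ≤ 1 := (le_mul_of_one_le_right hh.le hUx).trans hhU
  have hstep := hpow.integral_gradient_step_le_langevinGenerator le_rfl hA.le hC.le hβ.le
    hh.le hh1 (hU.norm_gradient_le (by norm_num) x) hUx hhU
  have hgenerator := mul_le_mul_of_nonneg_left (hlyapunov x) hh.le
  have hrelax := add_mul_le_exp_mul_add hγ hK.le (pow_nonneg (by linarith) ℓ : 0 ≤ U x ^ ℓ)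
    hh.le hh1
  simp only [Pi.pow_apply] at hstep
  linarith

end LocalDrift

section Assumption

variable {n : ℕ} {β : ℝ} {U : Euc n → ℝ}

theorem stdGaussian_eq_stdGaussian_euclideanSpace (n : ℕ) :
    stdGaussian n = ProbabilityTheory.stdGaussian (Euc n) := by
  rw [stdGaussian, ← withDensity_exp_neg_norm_sq_div_two_eq_stdGaussian, finrank_euclideanSpace_fin]

theorem lapl_eq_laplacian (U : Euc n → ℝ) : lapl U = Δ U := by
  rw [laplacian_eq_iteratedFDeriv_orthonormalBasis U (EuclideanSpace.basisFun (Fin n) ℝ)]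
  ext x
  simp [lapl, D2]

theorem Assumption1.exists_dominatesDerivs (hU : Assumption1 n β U) :
    ∃ C, DominatesDerivs 4 C U := by
  have hnonneg (x : Euc n) : 0 ≤ U x := zero_le_one.trans (hU.one_le x)
  obtain ⟨C, -, hbound⟩ := hU.deriv_bound
  simp only [sup_le_iff, norm_gradient_eq_norm_fderiv] at hbound
  have hmax (x : Euc n) : C * U x ≤ max C 1 * U x :=
    mul_le_mul_of_nonneg_right (le_max_left C 1) (hnonneg x)
  refine ⟨max C 1, hU.smooth, hnonneg, fun k hk x => ?_⟩
  obtain ⟨⟨⟨hfour, hthree⟩, htwo⟩, hone⟩ := hbound x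
  interval_cases k
  · rw [norm_iteratedFDeriv_zero, Real.norm_of_nonneg (hnonneg x)]
    exact le_mul_of_one_le_left (hnonneg x) (le_max_right C 1)
  · rw [norm_iteratedFDeriv_one]
    exact hone.trans (hmax x)
  · exact htwo.trans (hmax x)
  · exact hthree.trans (hmax x)
  · exact hfour.trans (hmax x)

end Assumption

/-- Local drift condition for forward Euler. -/
theorem euler_local_drift (n : ℕ) (β : ℝ) (hβ : 0 < β)
    (U : Euc n → ℝ) (hU : Assumption1 n β U) (ℓ : ℕ) :
    ∃ γ > (0:ℝ), ∃ K > (0:ℝ), ∃ C > (0:ℝ), ∀ h : ℝ, 0 < h → h < 1 →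
      ∀ x : Euc n, U x < h ^ (-(1:ℝ)/2) →
        (∫ ξ, U (x - h • gradient U x + Real.sqrt (2 * β⁻¹ * h) • ξ) ^ ℓ ∂(stdGaussian n))
          ≤ (exp (-γ * h) + C * U x ^ 2 * h ^ 2) * U x ^ ℓ
            + (K / γ) * (1 - exp (-γ * h)) := by
  obtain ⟨C, hC⟩ := hU.exists_dominatesDerivs
  obtain ⟨γ, hγ, K, hK, D, hD, hstep⟩ := euler_local_drift_general hβ hU.c_lt hU.d_pos hC hU.one_le
    (fun x hx => lapl_eq_laplacian U ▸ hU.driftB x hx) ℓ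
  rw [stdGaussian_eq_stdGaussian_euclideanSpace]
  exact ⟨γ, hγ, K, hK, D, hD, fun h hh _ => hstep h hh⟩

end
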